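/- arXiv:1804.00957 — 2 statements merged into one kernel-verified Lean document; each statement's English description precedes it below -/
import Mathlib

section
/- Let G be a finite graph with at least one edge and let r ≥ 2 be a real number. Then Φ_c(G) < r if and only if G admits a sub-r-MCNZF, i.e. a modular circular nowhere-zero r-flow all of whose values lie in the image of the open interval (1, r−1). -/
open scoped Classical

/-- A finite multigraph: finite vertex and edge types together with a reference
orientation recorded by source and target maps.  The underlying undirected graph
is obtained by forgetting the directions; reorienting an edge corresponds to
negating the value of a flow on it. -/
structure Multigraph where
  V : Type
  E : Type
  [fintypeV : Fintype V]
  [fintypeE : Fintype E]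
  src : E → V
  tgt : E → V

attribute [instance] Multigraph.fintypeV Multigraph.fintypeE

namespace Multigraph

/-- `f` is a flow with respect to the reference orientation: at every vertex the
sum of the values on incoming edges equals the sum on outgoing edges. -/
def IsFlow (G : Multigraph) {M : Type*} [AddCommMonoid M] (f : G.E → M) : Prop :=
  ∀ v : G.V, (∑ e : G.E, Set.indicator {e' : G.E | G.tgt e' = v} f e)
           = ∑ e : G.E, Set.indicator {e' : G.E | G.src e' = v} f e

/-- The edge `e` joins the vertices `v` and `w` (in either direction). -/
def Joins (G : Multigraph) (e : G.E) (v w : G.V) : Prop :=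
  (G.src e = v ∧ G.tgt e = w) ∨ (G.src e = w ∧ G.tgt e = v)

/-- `v` and `w` are adjacent: some edge joins them. -/
def Adj (G : Multigraph) (v w : G.V) : Prop := ∃ e : G.E, G.Joins e v w

/-- The degree of a vertex (loops count twice). -/
noncomputable def degree (G : Multigraph) (v : G.V) : ℕ :=
  Nat.card {e : G.E // G.src e = v} + Nat.card {e : G.E // G.tgt e = v}

/-- A set of edges is an even subgraph if every vertex is incident with an even
number of its edges (loops counting twice). -/
def IsEvenSubgraph (G : Multigraph) (J : Set G.E) : Prop :=
  ∀ v : G.V, Even (Nat.card {e : G.E // e ∈ J ∧ G.src e = v}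
    + Nat.card {e : G.E // e ∈ J ∧ G.tgt e = v})

/-- `G` has a circular nowhere-zero `r`-flow: for some orientation (encoded by
possibly negating values with respect to the reference orientation) there is a
real-valued flow with all values in `[1, r-1]`. -/
def HasCNZF (G : Multigraph) (r : ℝ) : Prop :=
  ∃ f : G.E → ℝ, G.IsFlow f ∧
    ∀ e : G.E, f e ∈ Set.Icc 1 (r - 1) ∨ -f e ∈ Set.Icc 1 (r - 1)

/-- The circular flow number `Φ_c(G)`, as an extended real (`⊤` if no `r`-CNZF
exists for any `r ≥ 2`). -/
noncomputable def flowNumber (G : Multigraph) : EReal :=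
  sInf {x : EReal | ∃ r : ℝ, x = (r : EReal) ∧ 2 ≤ r ∧ G.HasCNZF r}

/-- `G` has a modular circular nowhere-zero `r`-flow: a flow with values in
`ℝ/rℤ` lying (up to reorientation) in the image of `[1, r-1]`. -/
def HasMCNZF (G : Multigraph) (r : ℝ) : Prop :=
  ∃ f : G.E → AddCircle r, G.IsFlow f ∧
    ∀ e : G.E, f e ∈ (fun t : ℝ => (t : AddCircle r)) '' Set.Icc 1 (r - 1) ∨
      -f e ∈ (fun t : ℝ => (t : AddCircle r)) '' Set.Icc 1 (r - 1)

/-- `G` has a sub-`r`-MCNZF: an `r`-MCNZF all of whose values lie in the image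
of the open interval `(1, r-1)`. -/
def HasSubMCNZF (G : Multigraph) (r : ℝ) : Prop :=
  ∃ f : G.E → AddCircle r, G.IsFlow f ∧
    ∀ e : G.E, f e ∈ (fun t : ℝ => (t : AddCircle r)) '' Set.Ioo 1 (r - 1) ∨
      -f e ∈ (fun t : ℝ => (t : AddCircle r)) '' Set.Ioo 1 (r - 1)

end Multigraph

/-- The right endpoint representative: the representative of `b` in `(a, a+5]`. -/
def arcEnd (a b : ℤ) : ℤ := a + (if (b - a) % 5 = 0 then 5 else (b - a) % 5)

/-- The open integer arc `(a, b)` in `ℝ/5ℤ`: the image of the real interval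
`(a, b')` where `b'` is the representative of `b` in `(a, a+5]`. -/
def arc (a b : ℤ) : Set (AddCircle (5 : ℝ)) :=
  (fun t : ℝ => (t : AddCircle (5 : ℝ))) '' Set.Ioo (a : ℝ) (arcEnd a b : ℝ)

/-- `SI_5`: the symmetric subsets of `ℝ/5ℤ` that are unions of open integer arcs. -/
def SI5 : Set (Set (AddCircle (5 : ℝ))) :=
  {A | (∀ z, z ∈ A ↔ -z ∈ A) ∧ ∃ s : Set (ℤ × ℤ), A = ⋃ p ∈ s, arc p.1 p.2}

/-- The measure `Me A`: the number of (distinct) open unit arcs contained in `A`. -/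
noncomputable def Me (A : Set (AddCircle (5 : ℝ))) : ℕ :=
  Set.ncard {B : Set (AddCircle (5 : ℝ)) | B ⊆ A ∧ ∃ k : ℤ, B = arc k (k + 1)}

namespace Multigraph

/-- `G⁺_{xy}`: the graph `G` with one extra edge `e⁺` from `x` to `y`. -/
def addEdge (G : Multigraph) (x y : G.V) : Multigraph where
  V := G.V
  E := Option G.E
  src := fun e => e.elim x G.src
  tgt := fun e => e.elim y G.tgt

/-- The open 5-capacity of the generalised edge `G_{xy}`: all values that can pass
from `x` to `y` through `G` by a modular 5-flow of `G⁺_{xy}` whose values on the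
edges of `G` lie in the open arc `(1,4)`. -/
def CP5 (G : Multigraph) (x y : G.V) : Set (AddCircle (5 : ℝ)) :=
  {w | ∃ f : Option G.E → AddCircle (5 : ℝ),
    (G.addEdge x y).IsFlow f ∧ (∀ e : G.E, f (some e) ∈ arc 1 4) ∧ f none = w}

/-- `G` has a sub-5-MCNZF: a modular 5-flow with all values in the open arc `(1,4)`. -/
def HasSub5 (G : Multigraph) : Prop :=
  ∃ f : G.E → AddCircle (5 : ℝ), G.IsFlow f ∧ ∀ e : G.E, f e ∈ arc 1 4

/-- `G` has a `σ`-faithful flow: a modular 5-flow `f` with `f e ∈ σ e` for all `e`. -/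
def HasFaithful (G : Multigraph) (σ : G.E → Set (AddCircle (5 : ℝ))) : Prop :=
  ∃ f : G.E → AddCircle (5 : ℝ), G.IsFlow f ∧ ∀ e : G.E, f e ∈ σ e

/-- `G` has a `σ_{J,A}`-faithful flow: a modular 5-flow with values in `A` on the
edges of `J` and in the open arc `(1,4)` on all other edges. -/
def HasFaithfulOn (G : Multigraph) (J : Set G.E) (A : Set (AddCircle (5 : ℝ))) : Prop :=
  ∃ f : G.E → AddCircle (5 : ℝ), G.IsFlow f ∧ (∀ e ∈ J, f e ∈ A) ∧ ∀ e ∉ J, f e ∈ arc 1 4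

end Multigraph

/-- Cyclic successor on `Fin n`. -/
def rot (n : ℕ) (i : Fin n) : Fin n := ⟨(i.val + 1) % n, Nat.mod_lt _ i.pos⟩

/-- The wheel `W_n`: the external cycle `v_1 … v_n` (vertices `some i`, rim edges
`Sum.inl i` from `v_i` to `v_{i+1}`) together with a hub `v_c = none` joined to
every rim vertex by the spokes `Sum.inr i`. -/
def wheel (n : ℕ) : Multigraph where
  V := Option (Fin n)
  E := Fin n ⊕ Fin n
  src := fun e => match e with
    | Sum.inl i => some i
    | Sum.inr _ => none
  tgt := fun e => match e with
    | Sum.inl i => some (rot n i)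
    | Sum.inr i => some i

/-!
If `a` is a `q`-flow with `q < r`, then `(r / q) • a` is a real flow with values in `(1, r - 1)`,
and it can be reduced modulo `r`.

Conversely, lift the values of a sub-`r`-MCNZF to `a : E → (1, r - 1)` and consider the weightings
`x : E → [0, r]` with the same net inflow as `a`. They form a nonempty compact convex set, which
has an extreme point `y` (Krein–Milman). Modulo `r`, `y` is again a flow, so its support modulo `r`
has no vertex of degree one. If this support were nonempty, it would therefore carry a nonzero real
circulation, by counting dimensions, and `y` could be moved both ways along it. Hence `y` takes
only the values `0` and `r`, and `a - y` is a real flow with absolute values `a e` or `r - a e`.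
These are finitely many numbers below `r - 1`, so they are at most `q - 1` for some `q < r`.
-/

open Finset Filter Topology

theorem eventually_add_smul_mem_Icc {ι : Type*} [Finite ι] {l u x z : ι → ℝ}
    (hx : x ∈ Set.Icc l u) (hz : ∀ i, z i ≠ 0 → x i ∈ Set.Ioo (l i) (u i)) :
    ∀ᶠ ε : ℝ in 𝓝 0, x + ε • z ∈ Set.Icc l u := by
  have hcoord (i : ι) : ∀ᶠ ε : ℝ in 𝓝 0, x i + ε * z i ∈ Set.Icc (l i) (u i) := by
    by_cases hi : z i = 0
    · exact .of_forall fun ε => by simpa [hi] using ⟨hx.1 i, hx.2 i⟩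
    · have hcont : Continuous fun ε : ℝ => x i + ε * z i := by fun_prop
      exact hcont.tendsto' 0 (x i) (by simp) |>.eventually (Icc_mem_nhds (hz i hi).1 (hz i hi).2)
  filter_upwards [eventually_all.2 hcoord] with ε hε
  exact ⟨fun i => (hε i).1, fun i => (hε i).2⟩

theorem eq_zero_of_mem_extremePoints_Icc_inter_preimage {ι W : Type*} [Finite ι]
    [AddCommGroup W] [Module ℝ W] (T : (ι → ℝ) →ₗ[ℝ] W) {b : W} {l u x z : ι → ℝ}
    (hx : x ∈ (Set.Icc l u ∩ T ⁻¹' {b}).extremePoints ℝ)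
    (hz : ∀ i, z i ≠ 0 → x i ∈ Set.Ioo (l i) (u i)) (hTz : T z = 0) : z = 0 := by
  obtain ⟨⟨hxbox, hTx⟩, hext⟩ := mem_extremePoints_iff_left.1 hx
  have hplus := eventually_add_smul_mem_Icc hxbox hz
  have hminus := (continuous_neg.tendsto' (0 : ℝ) 0 neg_zero).eventually hplus
  obtain ⟨ε, ⟨hεplus, hεminus⟩, hε⟩ :=
    (((hplus.and hminus).filter_mono nhdsWithin_le_nhds).and
      (eventually_mem_nhdsWithin (a := (0 : ℝ)) (s := {0}ᶜ))).exists
  have hfiber (c : ℝ) : x + c • z ∈ T ⁻¹' {b} := by simpa [hTz] using hTx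
  have hmid : x ∈ openSegment ℝ (x + ε • z) (x + -ε • z) :=
    ⟨1 / 2, 1 / 2, by norm_num, by norm_num, by norm_num, by module⟩
  have hεz : x + ε • z = x := hext _ ⟨hεplus, hfiber ε⟩ _ ⟨hεminus, hfiber (-ε)⟩ hmid
  exact (smul_eq_zero.1 (add_eq_left.1 hεz)).resolve_left hε

namespace Multigraph

variable (G : Multigraph)

theorem isFlow_iff {M : Type*} [AddCommMonoid M] (f : G.E → M) :
    G.IsFlow f ↔ ∀ v, ∑ e with G.tgt e = v, f e = ∑ e with G.src e = v, f e := by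
  simp only [IsFlow, Set.indicator_apply, Set.mem_ofPred_eq, sum_filter]

variable {G} in
theorem IsFlow.map {M N : Type*} [AddCommMonoid M] [AddCommMonoid N] {f : G.E → M}
    (hf : G.IsFlow f) (φ : M →+ N) : G.IsFlow (φ ∘ f) := by
  rw [isFlow_iff] at hf ⊢
  intro v
  simpa only [Function.comp_apply, ← map_sum] using congrArg φ (hf v)

/-- The degree of `v` in the spanning subgraph of `G` with edge set `F`; as in
`Multigraph.degree`, loops count twice. -/
noncomputable def degreeOn (F : Finset G.E) (v : G.V) : ℕ :=
  #{e ∈ F | G.tgt e = v} + #{e ∈ F | G.src e = v}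

theorem degreeOn_eq_zero_iff {F : Finset G.E} {v : G.V} :
    G.degreeOn F v = 0 ↔ ∀ e ∈ F, G.tgt e ≠ v ∧ G.src e ≠ v := by
  simp only [degreeOn, Nat.add_eq_zero_iff, card_eq_zero, filter_eq_empty_iff, forall_and]

theorem sum_degreeOn (F : Finset G.E) : ∑ v, G.degreeOn F v = 2 * #F := by
  have hfiber (p : G.E → G.V) : ∑ v, #{e ∈ F | p e = v} = #F :=
    (card_eq_sum_card_fiberwise fun _ _ => mem_univ _).symm
  simp only [degreeOn, sum_add_distrib, hfiber, two_mul]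

variable {G} in
theorem card_degreeOn_ne_zero_le {F : Finset G.E} (hF : ∀ v, G.degreeOn F v ≠ 1) :
    #{v | G.degreeOn F v ≠ 0} ≤ #F := by
  have htwo : #{v | G.degreeOn F v ≠ 0} * 2 ≤ ∑ v with G.degreeOn F v ≠ 0, G.degreeOn F v :=
    card_nsmul_le_sum _ _ _ fun v hv =>
      (Nat.two_le_iff _).2 ⟨(mem_filter.1 hv).2, hF v⟩
  rw [sum_filter_ne_zero, sum_degreeOn] at htwo
  lia

variable {G} in
theorem IsFlow.degreeOn_support_ne_one {M : Type*} [AddCommMonoid M] {f : G.E → M}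
    [DecidablePred (f · ≠ 0)] (hf : G.IsFlow f) (v : G.V) : G.degreeOn {e | f e ≠ 0} v ≠ 1 := by
  have hsum (p : G.E → G.V) :
      ∑ e with p e = v, f e = ∑ e ∈ {e | f e ≠ 0} with p e = v, f e := by
    rw [filter_comm, sum_filter_ne_zero]
  have hbalance := (G.isFlow_iff f).1 hf v
  rw [hsum, hsum] at hbalance
  have hne {p : G.E → G.V} {e : G.E} (h : {e ∈ ({e | f e ≠ 0} : Finset G.E) | p e = v} = {e}) :
      f e ≠ 0 := by
    have he := h ▸ mem_singleton_self e
    simpa using (mem_filter.1 he).1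
  intro hdeg
  rcases Nat.add_eq_one_iff.1 hdeg with ⟨ht, hs⟩ | ⟨ht, hs⟩
  · obtain ⟨e, he⟩ := card_eq_one.1 hs
    rw [card_eq_zero.1 ht, he, sum_empty, sum_singleton] at hbalance
    exact hne he hbalance.symm
  · obtain ⟨e, he⟩ := card_eq_one.1 ht
    rw [card_eq_zero.1 hs, he, sum_empty, sum_singleton] at hbalance
    exact hne he hbalance

section NetInflow

variable (R : Type*) {M : Type*} [Semiring R] [AddCommGroup M] [Module R M]

/-- The `R`-linear map sending an edge weighting to its net inflow at each vertex, whose kernel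
consists of the flows. -/
noncomputable def netInflow : (G.E → M) →ₗ[R] (G.V → M) where
  toFun x v := ∑ e with G.tgt e = v, x e - ∑ e with G.src e = v, x e
  map_add' x y := by
    ext v
    simp only [Pi.add_apply, sum_add_distrib, add_sub_add_comm]
  map_smul' c x := by
    ext v
    simp only [Pi.smul_apply, ← smul_sum, smul_sub, RingHom.id_apply]

theorem netInflow_apply (x : G.E → M) (v : G.V) :
    G.netInflow R x v = ∑ e with G.tgt e = v, x e - ∑ e with G.src e = v, x e := rfl

theorem isFlow_iff_netInflow_eq_zero (x : G.E → M) : G.IsFlow x ↔ G.netInflow R x = 0 := by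
  simp only [isFlow_iff, funext_iff, netInflow_apply, Pi.zero_apply, sub_eq_zero]

theorem isFlow_mk_iff_netInflow_mem (S : AddSubgroup M) (x : G.E → M) :
    G.IsFlow (fun e => (x e : M ⧸ S)) ↔ ∀ v, G.netInflow R x v ∈ S := by
  simp only [isFlow_iff, netInflow_apply, ← QuotientAddGroup.eq_zero_iff,
    QuotientAddGroup.mk_sub, sub_eq_zero, QuotientAddGroup.mk_sum]

theorem sum_netInflow (x : G.E → M) : ∑ v, G.netInflow R x v = 0 := by
  have hfiber (p : G.E → G.V) : ∑ v, ∑ e with p e = v, x e = ∑ e, x e := sum_fiberwise _ p x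
  simp only [netInflow_apply, sum_sub_distrib, hfiber, sub_self]

variable {G} in
theorem netInflow_eq_zero_of_degreeOn_eq_zero {F : Finset G.E} {x : G.E → M}
    (hx : ∀ e ∉ F, x e = 0) {v : G.V} (hv : G.degreeOn F v = 0) : G.netInflow R x v = 0 := by
  have hinc (e : G.E) (he : G.tgt e = v ∨ G.src e = v) : x e = 0 :=
    hx e fun heF => by have := G.degreeOn_eq_zero_iff.1 hv e heF; tauto
  rw [netInflow_apply, sum_eq_zero, sum_eq_zero, sub_zero]
  · exact fun e he => hinc e (.inr (mem_filter.1 he).2)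
  · exact fun e he => hinc e (.inl (mem_filter.1 he).2)

end NetInflow

variable {G}

theorem exists_isFlow_of_degreeOn_ne_one (K : Type*) [Field K] {F : Finset G.E} (hne : F.Nonempty)
    (hF : ∀ v, G.degreeOn F v ≠ 1) :
    ∃ z : G.E → K, z ≠ 0 ∧ (∀ e ∉ F, z e = 0) ∧ G.IsFlow z := by
  obtain ⟨e₀, he₀⟩ := hne
  let U : Finset G.V := {v | G.degreeOn F v ≠ 0}
  have hv₀ : G.src e₀ ∈ U := by
    simpa [U] using fun h => (G.degreeOn_eq_zero_iff.1 h e₀ he₀).2 rfl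
  -- The net inflows sum to zero, so the equation at one non-isolated vertex is redundant.
  let T : (G.E → K) →ₗ[K] (U.erase (G.src e₀) → K) × ((Fᶜ : Finset G.E) → K) :=
    (LinearMap.funLeft K K Subtype.val ∘ₗ G.netInflow K).prod (LinearMap.funLeft K K Subtype.val)
  have hker : LinearMap.ker T ≠ ⊥ := by
    apply LinearMap.ker_ne_bot_of_finrank_lt
    have hU : #U ≤ #F := card_degreeOn_ne_zero_le hF
    have herase := card_erase_lt_of_mem hv₀
    have hcompl := card_add_card_compl F
    simp only [Module.finrank_prod, Module.finrank_fintype_fun_eq_card, Fintype.card_coe]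
    lia
  obtain ⟨z, hTz, hz⟩ := (Submodule.ne_bot_iff _).1 hker
  obtain ⟨hinflow, hsupp⟩ := Prod.ext_iff.1 (LinearMap.mem_ker.1 hTz)
  have hzF : ∀ e ∉ F, z e = 0 := fun e he => congrFun hsupp ⟨e, mem_compl.2 he⟩
  have hother : ∀ v ≠ G.src e₀, G.netInflow K z v = 0 := by
    intro v hv
    by_cases hvU : v ∈ U
    · exact congrFun hinflow ⟨v, mem_erase.2 ⟨hv, hvU⟩⟩
    · exact netInflow_eq_zero_of_degreeOn_eq_zero K hzF (by simpa [U] using hvU)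
  have hsrc : G.netInflow K z (G.src e₀) = 0 := by
    rw [← G.sum_netInflow K z, sum_eq_single_of_mem _ (mem_univ _) fun v _ hv => hother v hv]
  refine ⟨z, hz, hzF, (G.isFlow_iff_netInflow_eq_zero K z).2 (funext fun v => ?_)⟩
  rcases eq_or_ne v (G.src e₀) with rfl | hv
  exacts [hsrc, hother v hv]

theorem eq_zero_or_eq_of_mem_extremePoints {r : ℝ} (hr : 0 < r) {b : G.V → ℝ} {y : G.E → ℝ}
    (hb : ∀ v, b v ∈ AddSubgroup.zmultiples r)
    (hy : y ∈ (Set.Icc 0 (fun _ => r) ∩ G.netInflow ℝ ⁻¹' {b}).extremePoints ℝ) (e : G.E) :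
    y e = 0 ∨ y e = r := by
  obtain ⟨⟨hy₀, hyr⟩, hyb⟩ := hy.1
  have hmod : G.IsFlow fun e => (y e : AddCircle r) :=
    (G.isFlow_mk_iff_netInflow_mem ℝ _ y).2 fun v => congrFun hyb v ▸ hb v
  have hsupport (e : G.E) (he : (y e : AddCircle r) ≠ 0) : y e ∈ Set.Ioo 0 r := by
    refine ⟨(hy₀ e).lt_of_ne' fun h => he (by simp [h]), (hyr e).lt_of_ne fun h => he ?_⟩
    rw [h, AddCircle.coe_period]
  have hzero (e : G.E) : (y e : AddCircle r) = 0 := by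
    by_contra he
    obtain ⟨z, hz, hzF, hzflow⟩ := exists_isFlow_of_degreeOn_ne_one ℝ
      (F := {e | (y e : AddCircle r) ≠ 0}) ⟨e, by simpa using he⟩ hmod.degreeOn_support_ne_one
    refine hz (eq_zero_of_mem_extremePoints_Icc_inter_preimage _ hy (fun e he => hsupport e ?_)
      ((G.isFlow_iff_netInflow_eq_zero ℝ z).1 hzflow))
    exact fun h => he (hzF e (by simpa using h))
  refine (hyr e).eq_or_lt.symm.imp_left fun hlt => ?_
  have : Fact (0 < r) := ⟨hr⟩
  exact (AddCircle.coe_eq_zero_iff_of_mem_Ico ⟨hy₀ e, hlt⟩).1 (hzero e)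

/-- Tutte's theorem that modular flows lift to real flows. -/
theorem IsFlow.exists_eq_or_eq_sub {r : ℝ} (hr : 0 < r) {a : G.E → ℝ}
    (ha : ∀ e, a e ∈ Set.Icc 0 r) (hflow : G.IsFlow fun e => (a e : AddCircle r)) :
    ∃ g : G.E → ℝ, G.IsFlow g ∧ ∀ e, g e = a e ∨ g e = a e - r := by
  have hcont : Continuous (G.netInflow ℝ (M := ℝ)) :=
    LinearMap.continuous_of_finiteDimensional _
  have hcompact : IsCompact
      (Set.Icc 0 (fun _ => r) ∩ G.netInflow ℝ ⁻¹' {G.netInflow ℝ a}) :=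
    isCompact_Icc.inter_right (isClosed_singleton.preimage hcont)
  obtain ⟨y, hy⟩ := hcompact.extremePoints_nonempty
    ⟨a, ⟨fun e => (ha e).1, fun e => (ha e).2⟩, rfl⟩
  have hya : G.netInflow ℝ y = G.netInflow ℝ a := hy.1.2
  refine ⟨a - y, (G.isFlow_iff_netInflow_eq_zero ℝ _).2 ?_, fun e => ?_⟩
  · rw [map_sub, hya, sub_self]
  · have hmod := (G.isFlow_mk_iff_netInflow_mem ℝ _ a).1 hflow
    refine (eq_zero_or_eq_of_mem_extremePoints hr hmod hy e).imp (fun h => ?_) fun h => ?_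
    all_goals simp [h]

theorem HasSubMCNZF.exists_isFlow_abs_mem_Ioo {r : ℝ} (h : G.HasSubMCNZF r) (hr : 0 < r) :
    ∃ g : G.E → ℝ, G.IsFlow g ∧ ∀ e, |g e| ∈ Set.Ioo 1 (r - 1) := by
  obtain ⟨f, hf, hfr⟩ := h
  have hlift (e : G.E) : ∃ a ∈ Set.Ioo 1 (r - 1), (a : AddCircle r) = f e := by
    rcases hfr e with h | ⟨a, ha, hae : (a : AddCircle r) = -f e⟩
    · exact h
    · refine ⟨r - a, ⟨by linarith [ha.2], by linarith [ha.1]⟩, ?_⟩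
      rw [AddCircle.coe_sub, AddCircle.coe_period, hae, zero_sub, neg_neg]
  choose a ha hae using hlift
  obtain ⟨g, hg, hga⟩ := IsFlow.exists_eq_or_eq_sub hr
    (fun e => ⟨by linarith [(ha e).1], by linarith [(ha e).2]⟩) (funext hae ▸ hf)
  refine ⟨g, hg, fun e => ?_⟩
  obtain ⟨hlow, hupp⟩ := ha e
  rcases hga e with h | h
  · rw [h, abs_of_pos (by linarith)]
    exact ha e
  · rw [h, abs_of_neg (by linarith), neg_sub]
    exact ⟨by linarith, by linarith⟩

theorem HasSubMCNZF.exists_hasCNZF_lt [Nonempty G.E] {r : ℝ} (h : G.HasSubMCNZF r) (hr : 0 < r) :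
    ∃ q, 2 ≤ q ∧ q < r ∧ G.HasCNZF q := by
  obtain ⟨g, hg, hgr⟩ := h.exists_isFlow_abs_mem_Ioo hr
  obtain ⟨e₀, he₀⟩ := Finite.exists_max fun e => |g e|
  refine ⟨|g e₀| + 1, by linarith [(hgr e₀).1], by linarith [(hgr e₀).2], g, hg, fun e => ?_⟩
  rw [add_sub_cancel_right]
  have hmem : |g e| ∈ Set.Icc 1 |g e₀| := ⟨(hgr e).1.le, he₀ e⟩
  exact (abs_choice (g e)).imp (fun h => by rwa [h] at hmem) fun h => by rwa [h] at hmem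

theorem HasCNZF.hasSubMCNZF_of_lt {q r : ℝ} (h : G.HasCNZF q) (hqr : q < r) :
    G.HasSubMCNZF r := by
  obtain ⟨f, hf, hfq⟩ := h
  have hscale (a : ℝ) (ha : a ∈ Set.Icc 1 (q - 1)) : r / q * a ∈ Set.Ioo 1 (r - 1) := by
    have hq : 0 < q := by linarith [ha.1, ha.2]
    have hrq : 1 < r / q := (one_lt_div hq).2 hqr
    refine ⟨one_lt_mul_of_lt_of_le hrq ha.1, ?_⟩
    calc r / q * a ≤ r / q * (q - 1) := by gcongr; exact ha.2
      _ = r - r / q := by field_simp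
      _ < r - 1 := by linarith
  let φ : ℝ →+ AddCircle r :=
    (QuotientAddGroup.mk' (AddSubgroup.zmultiples r)).comp (AddMonoidHom.mulLeft (r / q))
  refine ⟨φ ∘ f, hf.map φ, fun e => (hfq e).imp (fun h => ⟨_, hscale _ h, rfl⟩) fun h => ?_⟩
  exact ⟨_, hscale _ h, map_neg φ (f e)⟩

theorem flowNumber_lt_coe_iff {r : ℝ} :
    G.flowNumber < r ↔ ∃ q, 2 ≤ q ∧ q < r ∧ G.HasCNZF q := by
  simp only [flowNumber, sInf_lt_iff, Set.mem_ofPred_eq]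
  constructor
  · rintro ⟨_, ⟨q, rfl, hq, hG⟩, hqr⟩
    exact ⟨q, hq, EReal.coe_lt_coe_iff.1 hqr, hG⟩
  · rintro ⟨q, hq, hqr, hG⟩
    exact ⟨q, ⟨q, rfl, hq, hG⟩, EReal.coe_lt_coe_iff.2 hqr⟩

end Multigraph

/-- for a finite graph with at least one edge and `r ≥ 2`,
`Φ_c(G) < r` iff `G` admits a sub-`r`-MCNZF. -/
theorem flowNumber_lt_iff_hasSubMCNZF (G : Multigraph) (hE : Nonempty G.E)
    (r : ℝ) (hr : 2 ≤ r) :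
    G.flowNumber < (r : EReal) ↔ G.HasSubMCNZF r := by
  rw [Multigraph.flowNumber_lt_coe_iff]
  constructor
  · rintro ⟨q, -, hqr, hq⟩
    exact hq.hasSubMCNZF_of_lt hqr
  · intro h
    exact h.exists_hasCNZF_lt (by linarith)
end

section
/- Every element of SI_5 is graphic: for every A ∈ SI_5 there exists a generalised edge whose open 5-capacity equals A, i.e. a finite graph G with two distinct terminals x, y such that CP_5(G_{xy}) = A. In other words, GI_5 = SI_5. -/
/-!
Write `‖z‖` for the distance from `z` to `0` in `ℝ/5ℤ`. A set in `SI_5` is determined by the norms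
of its elements, and its complement is a union of sets `{z | ‖z‖ ∈ c}`, where `c` is one of the
cells `{0}`, `[0, 1]`, `{1}`, `[1, 2]`, `{2}`, `[2, 5/2]`. Hence it is a finite intersection of
complements of such sets.

Substituting generalised edges for the edges of a graph shows that a graph whose edges carry values
in graphic sets has graphic capacities. Two parallel edges, a path with two edges and the Wheatstone
bridge turn this into closure under sums, under intersections and under one further operation.

The arc `(1, 4) = {‖z‖ > 1}` is the capacity of a single edge, and the arc `(4, 1) = {‖z‖ < 1}` is
that of the Petersen graph with an edge deleted. Indeed, if a flow of the Petersen graph had norms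
`> 1` on all other edges and `≥ 1` on that edge, then the deviations of its values from `5/2`, of
size at most `3/2` on that edge and less than `3/2` elsewhere, would have net inflow `5/2` at half
of the vertices and `-5/2` at the others. As the graph has no `2`-bisection, one of these halves
contains a path with three vertices, and the five edges leaving this path cannot carry a net inflow
of `± 15/2`.

Sums and intersections of these two arcs yield the complements of the cells `{0}`, `[0, 1]`, `{1}`,
`[2, 5/2]`, and bridges yield those of `[1, 2]` and `{2}`.
-/

open scoped Classical

/-! ### Capacities -/

open Finsupp Set
open scoped Pointwise

namespace Multigraph

section Boundary

variable {M : Type*} [AddCommGroup M] (G : Multigraph)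

/-- The boundary of `f` seen as a `1`-chain: its value at a vertex is the net inflow there. -/
noncomputable def boundary (f : G.E → M) : G.V →₀ M :=
  ∑ e, (single (G.tgt e) (f e) - single (G.src e) (f e))

variable {G}

theorem isFlow_iff_boundary_eq_zero {f : G.E → M} : G.IsFlow f ↔ G.boundary f = 0 := by
  simp [IsFlow, boundary, Finsupp.ext_iff, Finsupp.finsetSum_apply, Finsupp.single_apply,
    Set.indicator_apply, sub_eq_zero]

theorem boundary_neg (f : G.E → M) : G.boundary (-f) = -G.boundary f := by
  simp only [boundary, Pi.neg_apply, single_neg, ← Finset.sum_neg_distrib, neg_sub,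
    neg_sub_neg]

theorem boundary_add (f g : G.E → M) : G.boundary (f + g) = G.boundary f + G.boundary g := by
  simp only [boundary, Pi.add_apply, single_add, ← Finset.sum_add_distrib, add_sub_add_comm]

theorem boundary_map_apply {N : Type*} [AddCommGroup N] (φ : M →+ N) (f : G.E → M) (v : G.V) :
    G.boundary (fun e => φ (f e)) v = φ (G.boundary f v) := by
  simp [boundary, single_apply, apply_ite φ]

theorem sum_boundary_apply (f : G.E → M) : ∑ v, G.boundary f v = 0 := by
  simp only [boundary, Finsupp.finsetSum_apply, Finsupp.sub_apply]
  rw [Finset.sum_comm]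
  simp [Finsupp.single_apply]

theorem isFlow_addEdge_iff {x y : G.V} {f : Option G.E → M} : (G.addEdge x y).IsFlow f ↔
    G.boundary (fun e => f (some e)) = single x (f none) - single y (f none) := by
  have boundary_addEdge : (G.addEdge x y).boundary f =
      single y (f none) - single x (f none) + G.boundary fun e => f (some e) :=
    Fintype.sum_option _
  refine isFlow_iff_boundary_eq_zero.trans ?_
  rw [boundary_addEdge, ← neg_sub (single x _), neg_add_eq_sub]
  exact sub_eq_zero

end Boundary

section Capacity

variable {M : Type*} [AddCommGroup M]

/-- The capacity of the generalised edge `G_{xy}` when each edge `e` of `G` may only carry values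
in `σ e`: the values which a new edge from `x` to `y` takes in the flows respecting `σ`. -/
def capacity (G : Multigraph) (x y : G.V) (σ : G.E → Set M) : Set M :=
  {w | ∃ f : G.E → M, (∀ e, f e ∈ σ e) ∧ G.boundary f = single x w - single y w}

variable {G : Multigraph} {x y : G.V}

theorem CP5_eq_capacity : G.CP5 x y = G.capacity x y fun _ => arc 1 4 := by
  ext w
  constructor
  · rintro ⟨f, hf, he, rfl⟩
    exact ⟨fun e => f (some e), he, isFlow_addEdge_iff.1 hf⟩
  · rintro ⟨f, he, hf⟩
    exact ⟨fun e => e.elim w f, isFlow_addEdge_iff.2 hf, he, rfl⟩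

theorem neg_mem_capacity {σ : G.E → Set M} (hσ : ∀ e, ∀ z ∈ σ e, -z ∈ σ e) {w : M}
    (hw : w ∈ G.capacity x y σ) : -w ∈ G.capacity x y σ := by
  obtain ⟨f, hf, hw⟩ := hw
  refine ⟨-f, fun e => hσ e _ (hf e), ?_⟩
  rw [boundary_neg, hw, single_neg, single_neg, neg_sub, neg_sub_neg]

/-- `G` with the edge `e` deleted. -/
noncomputable abbrev deleteEdge (G : Multigraph) (e : G.E) : Multigraph where
  V := G.V
  E := {e' // e' ≠ e}
  src := fun e' => G.src e'
  tgt := fun e' => G.tgt e'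

theorem mem_capacity_deleteEdge {e : G.E} {σ : G.E → Set M} {w : M} :
    w ∈ (G.deleteEdge e).capacity (G.src e) (G.tgt e) (fun e' => σ e') ↔
      ∃ f : G.E → M, G.boundary f = 0 ∧ (∀ e' ≠ e, f e' ∈ σ e') ∧ f e = w := by
  have boundary_eq (f : G.E → M) : G.boundary f =
      single (G.tgt e) (f e) - single (G.src e) (f e)
        + (G.deleteEdge e).boundary fun e' => f e' :=
    Fintype.sum_eq_add_sum_subtype_ne _ e
  constructor
  · rintro ⟨f, hf, h⟩
    have hext : (fun e' : {e' // e' ≠ e} => if h : (e' : G.E) = e then w else f ⟨e', h⟩) = f :=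
      funext fun e' => dif_neg e'.2
    refine ⟨fun e' => if h : e' = e then w else f ⟨e', h⟩, ?_, fun e' he' => ?_, dif_pos rfl⟩
    · rw [boundary_eq, dif_pos rfl, hext, h]
      exact sub_add_sub_cancel _ _ _ |>.trans (sub_self _)
    · simpa [he'] using hf ⟨e', he'⟩
  · rintro ⟨f, hf, hσ, rfl⟩
    refine ⟨fun e' => f e', fun e' => hσ e' e'.2, ?_⟩
    rw [boundary_eq, add_comm] at hf
    rw [eq_neg_of_add_eq_zero_left hf, neg_sub]

end Capacity

section Substitution

variable {M : Type*} [AddCommGroup M]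

theorem eq_single_sub_single {α : Type*} [Fintype α] {a b : α} (hab : a ≠ b) {c : α →₀ M}
    (hsum : ∑ v, c v = 0) (hc : ∀ v, v ≠ a → v ≠ b → c v = 0) :
    c = single a (c a) - single b (c a) := by
  have hb : c a + c b = 0 := by
    rw [← hsum, Fintype.sum_eq_add a b hab fun v hv => hc v hv.1 hv.2]
  ext v
  by_cases hva : v = a
  · simp [hva, hab.symm]
  by_cases hvb : v = b
  · simp [hvb, hab, eq_neg_of_add_eq_zero_right hb]
  simp [*]

variable {H : Multigraph} {G : H.E → Multigraph} {a b : ∀ e, (G e).V}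

variable (H G a b) in
/-- The position of a vertex of `G e` in the graph obtained by substituting `G e` for the edge `e`
of `H`: the terminals `a e` and `b e` are identified with the target and the source of `e`. -/
noncomputable def substVertex (e : H.E) (v : (G e).V) :
    H.V ⊕ Σ e, {v : (G e).V // v ≠ a e ∧ v ≠ b e} :=
  if ha : v = a e then Sum.inl (H.tgt e)
  else if hb : v = b e then Sum.inl (H.src e) else Sum.inr ⟨e, v, ha, hb⟩

variable (H G a b) in
/-- The graph obtained from `H` by substituting the generalised edge `G e` with terminals
`a e`, `b e` for each edge `e`. -/
noncomputable abbrev subst : Multigraph where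
  V := H.V ⊕ Σ e, {v : (G e).V // v ≠ a e ∧ v ≠ b e}
  E := Σ e, (G e).E
  src := fun i => substVertex H G a b i.1 ((G i.1).src i.2)
  tgt := fun i => substVertex H G a b i.1 ((G i.1).tgt i.2)

theorem substVertex_left (e : H.E) : substVertex H G a b e (a e) = Sum.inl (H.tgt e) :=
  dif_pos rfl

theorem substVertex_right {e : H.E} (hab : a e ≠ b e) :
    substVertex H G a b e (b e) = Sum.inl (H.src e) := by
  simp [substVertex, hab.symm]

theorem substVertex_eq_inr_iff {e e' : H.E} {v : (G e).V}
    {v' : {v : (G e').V // v ≠ a e' ∧ v ≠ b e'}} :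
    substVertex H G a b e v = Sum.inr ⟨e', v'⟩ ↔ e = e' ∧ HEq v v'.1 := by
  obtain ⟨v', ha', hb'⟩ := v'
  unfold substVertex
  split_ifs with ha hb <;> simp only [Sum.inr.injEq, Sigma.mk.injEq, false_iff]
  · rintro ⟨rfl, rfl⟩
    exact ha' ha
  · rintro ⟨rfl, rfl⟩
    exact hb' hb
  · refine and_congr_right ?_
    rintro rfl
    simp

theorem boundary_subst (f : (subst H G a b).E → M) :
    (subst H G a b).boundary f =
      ∑ e, ((G e).boundary fun i => f ⟨e, i⟩).mapDomain (substVertex H G a b e) := by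
  simp only [boundary, mapDomain_finsetSum, mapDomain_sub, mapDomain_single]
  exact Fintype.sum_sigma _

theorem boundary_subst_inr (f : (subst H G a b).E → M) {e : H.E}
    (v : {v : (G e).V // v ≠ a e ∧ v ≠ b e}) :
    (subst H G a b).boundary f (Sum.inr ⟨e, v⟩) = (G e).boundary (fun i => f ⟨e, i⟩) v := by
  rw [boundary_subst, Finsupp.finsetSum_apply, Finset.sum_eq_single e _ (by simp)]
  · rw [mapDomain, Finsupp.sum_fintype _ _ (by simp), Finsupp.finsetSum_apply]
    simp [single_apply, substVertex_eq_inr_iff]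
  · intro e' _ he'
    refine mapDomain_of_notMem_range _ _ ?_
    rintro ⟨v', hv'⟩
    exact he' (substVertex_eq_inr_iff.1 hv').1

theorem capacity_subst (hab : ∀ e, a e ≠ b e) {x y : H.V} {σ : (subst H G a b).E → Set M} :
    (subst H G a b).capacity (Sum.inl x) (Sum.inl y) σ =
      H.capacity x y fun e => (G e).capacity (a e) (b e) fun i => σ ⟨e, i⟩ := by
  ext w
  have boundary_eq {f : (subst H G a b).E → M} {g : H.E → M}
      (hg : ∀ e, (G e).boundary (fun i => f ⟨e, i⟩) = single (a e) (g e) - single (b e) (g e)) :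
      (subst H G a b).boundary f = (H.boundary g).mapDomain Sum.inl := by
    simp only [boundary_subst, hg, mapDomain_sub, mapDomain_single, substVertex_left,
      substVertex_right (hab _)]
    simp only [boundary, mapDomain_finsetSum, mapDomain_sub, mapDomain_single]
  have mapDomain_single_sub : (single x w - single y w).mapDomain Sum.inl =
      (single (Sum.inl x) w - single (Sum.inl y) w : (subst H G a b).V →₀ M) := by
    rw [mapDomain_sub, mapDomain_single, mapDomain_single]
  constructor
  · rintro ⟨f, hf, h⟩
    have hg (e : H.E) := eq_single_sub_single (hab e) (sum_boundary_apply fun i => f ⟨e, i⟩)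
      fun v hva hvb => (boundary_subst_inr f ⟨v, hva, hvb⟩).symm.trans (by simp [h])
    refine ⟨_, fun e => ⟨fun i => f ⟨e, i⟩, fun i => hf _, hg e⟩, ?_⟩
    exact mapDomain_injective Sum.inl_injective
      ((boundary_eq hg).symm.trans (h.trans mapDomain_single_sub.symm))
  · rintro ⟨g, hg, h⟩
    choose f hf hfg using hg
    refine ⟨fun i => f i.1 i.2, fun i => hf i.1 i.2, ?_⟩
    rw [boundary_eq (f := fun i => f i.1 i.2) hfg, h, mapDomain_single_sub]

end Substitution

section SmallGraphs

variable {M : Type*} [AddCommGroup M]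

/-- The graph with two vertices `0`, `1` and `n` parallel edges from `1` to `0`. -/
abbrev dipole (n : ℕ) : Multigraph where
  V := Fin 2
  E := Fin n
  src := fun _ => 1
  tgt := fun _ => 0

theorem boundary_dipole {n : ℕ} {f : Fin n → M} :
    (dipole n).boundary f = single 0 (∑ i, f i) - single 1 (∑ i, f i) := by
  simp only [boundary, Finset.sum_sub_distrib, single_finsetSum]

theorem capacity_dipole {n : ℕ} {σ : Fin n → Set M} : (dipole n).capacity 0 1 σ = ∑ i, σ i := by
  ext w
  have flow_iff (f : Fin n → M) :
      (dipole n).boundary f = single 0 w - single 1 w ↔ ∑ i, f i = w := by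
    rw [boundary_dipole]
    refine ⟨fun h => ?_, fun h => h ▸ rfl⟩
    simpa using DFunLike.congr_fun h 0
  rw [Set.mem_fintype_sum]
  simp only [capacity, flow_iff, mem_ofPred_eq, exists_prop]

/-- The directed path `2 → 1 → 0`. -/
abbrev path : Multigraph where
  V := Fin 3
  E := Fin 2
  src := ![1, 2]
  tgt := ![0, 1]

theorem capacity_path {A B : Set M} : path.capacity 0 2 ![A, B] = A ∩ B := by
  ext w
  have flow_iff (f : Fin 2 → M) :
      path.boundary f = single 0 w - single 2 w ↔ f 0 = w ∧ f 1 - f 0 = 0 ∧ f 1 = w := by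
    simp [boundary, Finsupp.ext_iff, Fin.forall_fin_succ, Fin.sum_univ_succ]
  constructor
  · rintro ⟨f, hσ, hf⟩
    obtain ⟨h₀, -, h₁⟩ := (flow_iff f).1 hf
    exact ⟨h₀ ▸ hσ 0, h₁ ▸ hσ 1⟩
  · rintro ⟨hA, hB⟩
    exact ⟨fun _ => w, Fin.forall_fin_two.2 ⟨hA, hB⟩, (flow_iff _).2 ⟨rfl, sub_self w, rfl⟩⟩

/-- The Wheatstone bridge between `0` and `3`: two paths `3 → 1 → 0` and `3 → 2 → 0`, together with
an edge `1 → 2`. -/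
abbrev wheatstone : Multigraph where
  V := Fin 4
  E := Fin 5
  src := ![3, 3, 1, 1, 2]
  tgt := ![1, 2, 2, 0, 0]

theorem capacity_wheatstone {A B C D F : Set M} : wheatstone.capacity 0 3 ![A, B, C, D, F] =
    {w | ∃ t ∈ A, ∃ q ∈ B, ∃ s ∈ C, t - s ∈ D ∧ q + s ∈ F ∧ q + t = w} := by
  ext w
  have flow_iff (f : Fin 5 → M) : wheatstone.boundary f = single 0 w - single 3 w ↔
      f 3 = f 0 - f 2 ∧ f 4 = f 1 + f 2 ∧ f 1 + f 0 = w := by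
    have vertices : wheatstone.boundary f = single 0 w - single 3 w ↔
        f 3 + f 4 = w ∧ f 0 - f 2 - f 3 = 0 ∧ f 1 + f 2 - f 4 = 0 ∧ -f 0 - f 1 = -w := by
      simp [boundary, Finsupp.ext_iff, Fin.forall_fin_succ, Fin.sum_univ_succ, sub_eq_add_neg,
        add_assoc]
    grind
  constructor
  · rintro ⟨f, hσ, hf⟩
    obtain ⟨h₃, h₄, hw⟩ := (flow_iff f).1 hf
    exact ⟨f 0, hσ 0, f 1, hσ 1, f 2, hσ 2, h₃ ▸ hσ 3, h₄ ▸ hσ 4, hw⟩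
  · rintro ⟨t, ht, q, hq, s, hs, hD, hF, hw⟩
    refine ⟨![t, q, s, t - s, q + s], ?_, (flow_iff _).2 ⟨rfl, rfl, hw⟩⟩
    simpa [Fin.forall_fin_succ] using ⟨ht, hq, hs, hD, hF⟩

end SmallGraphs

end Multigraph

open Multigraph

/-- `A` is graphic: it is the open `5`-capacity of some generalised edge. -/
def IsGraphic (A : Set (AddCircle (5 : ℝ))) : Prop :=
  ∃ (G : Multigraph) (x y : G.V), x ≠ y ∧ G.CP5 x y = A

namespace IsGraphic

variable {A B C D F : Set (AddCircle (5 : ℝ))}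

theorem capacity {H : Multigraph} {x y : H.V} (hxy : x ≠ y) {σ : H.E → Set (AddCircle (5 : ℝ))}
    (hσ : ∀ e, IsGraphic (σ e)) : IsGraphic (H.capacity x y σ) := by
  choose G a b hab hCP using hσ
  refine ⟨subst H G a b, .inl x, .inl y, Sum.inl_injective.ne hxy, ?_⟩
  rw [CP5_eq_capacity, capacity_subst hab]
  simp only [← CP5_eq_capacity, hCP]

theorem arc_one_four : IsGraphic (arc 1 4) :=
  ⟨dipole 1, 0, 1, Fin.zero_ne_one, by simp [CP5_eq_capacity, capacity_dipole]⟩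

theorem add (hA : IsGraphic A) (hB : IsGraphic B) : IsGraphic (A + B) := by
  have h := capacity (H := dipole 2) Fin.zero_ne_one (σ := ![A, B]) (Fin.forall_fin_two.2 ⟨hA, hB⟩)
  simpa [capacity_dipole] using h

theorem inter (hA : IsGraphic A) (hB : IsGraphic B) : IsGraphic (A ∩ B) := by
  have h := capacity (H := path) (x := 0) (y := 2) (by decide) (σ := ![A, B])
    (Fin.forall_fin_two.2 ⟨hA, hB⟩)
  rwa [capacity_path] at h

theorem wheatstone (hA : IsGraphic A) (hB : IsGraphic B) (hC : IsGraphic C) (hD : IsGraphic D)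
    (hF : IsGraphic F) :
    IsGraphic {w | ∃ t ∈ A, ∃ q ∈ B, ∃ s ∈ C, t - s ∈ D ∧ q + s ∈ F ∧ q + t = w} := by
  have h := capacity (H := Multigraph.wheatstone) (x := 0) (y := 3) (by decide)
    (σ := ![A, B, C, D, F]) (by simpa [Fin.forall_fin_succ] using ⟨hA, hB, hC, hD, hF⟩)
  rwa [capacity_wheatstone] at h

end IsGraphic

/-! ### The norm of `ℝ/pℤ` -/

section Norm

variable {p : ℝ}

theorem norm_coe_eq_min {x : ℝ} (hx : |x| ≤ p) : ‖(x : AddCircle p)‖ = min |x| (p - |x|) := by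
  rcases (abs_nonneg x |>.trans hx).eq_or_lt with rfl | hp
  · simp [abs_nonpos_iff.1 hx]
  have norm_eq_abs {y : ℝ} (hy : |y| ≤ p / 2) : ‖(y : AddCircle p)‖ = |y| :=
    (AddCircle.norm_coe_eq_abs_iff p hp.ne').2 (by rwa [abs_of_pos hp])
  have norm_coe_abs : ‖(x : AddCircle p)‖ = ‖((|x| : ℝ) : AddCircle p)‖ := by
    rcases abs_choice x with h | h <;> simp [h]
  have norm_coe_sub : ‖((|x| : ℝ) : AddCircle p)‖ = ‖((p - |x| : ℝ) : AddCircle p)‖ := by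
    rw [AddCircle.coe_sub, AddCircle.coe_period, zero_sub, norm_neg]
  rcases le_total |x| (p / 2) with h | h
  · rw [norm_eq_abs h, min_eq_left (by linarith)]
  · rw [norm_coe_abs, norm_coe_sub, norm_eq_abs, abs_of_nonneg, min_eq_right] <;>
      grind

theorem coe_norm_eq_or_eq_neg (z : AddCircle p) :
    (‖z‖ : AddCircle p) = z ∨ (‖z‖ : AddCircle p) = -z := by
  induction z using QuotientAddGroup.induction_on with | H x =>
  have coe_eq : ((x - round (p⁻¹ * x) * p : ℝ) : AddCircle p) = x := by
    simp [← zsmul_eq_mul, AddCircle.coe_period]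
  rw [AddCircle.norm_eq]
  rcases abs_choice (x - round (p⁻¹ * x) * p) with h | h <;> rw [h]
  · exact .inl coe_eq
  · exact .inr (by rw [AddCircle.coe_neg, coe_eq])

theorem exists_abs_eq_norm_and_coe_eq (z : AddCircle p) :
    ∃ x : ℝ, |x| = ‖z‖ ∧ (x : AddCircle p) = z := by
  rcases coe_norm_eq_or_eq_neg z with h | h
  · exact ⟨‖z‖, abs_norm z, h⟩
  · exact ⟨-‖z‖, by rw [abs_neg, abs_norm], by rw [AddCircle.coe_neg, h, neg_neg]⟩

theorem norm_eq_norm_iff_eq_or_eq_neg {z w : AddCircle p} : ‖z‖ = ‖w‖ ↔ z = w ∨ z = -w := by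
  refine ⟨fun h => ?_, fun h => h.elim (congrArg _) fun h => by rw [h, norm_neg]⟩
  have hz := coe_norm_eq_or_eq_neg z
  have hw := coe_norm_eq_or_eq_neg w
  grind [neg_neg z]

theorem norm_mem_Icc (hp : 0 < p) (z : AddCircle p) : ‖z‖ ∈ Icc 0 (p / 2) :=
  ⟨norm_nonneg z, by simpa [abs_of_pos hp] using AddCircle.norm_le_half_period p hp.ne' (x := z)⟩

theorem norm_coe_of_mem_Icc {x : ℝ} (hx : x ∈ Icc 0 (p / 2)) : ‖(x : AddCircle p)‖ = x := by
  rw [norm_coe_eq_min, min_eq_left] <;> rw [abs_of_nonneg hx.1] <;> linarith [hx.1, hx.2]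

theorem norm_coe_sub_coe {a b : ℝ} (ha : a ∈ Icc 0 (p / 2)) (hb : b ∈ Icc 0 (p / 2)) :
    ‖(a - b : AddCircle p)‖ = |a - b| := by
  rw [← AddCircle.coe_sub, norm_coe_eq_min] <;> grind

theorem norm_coe_add_coe {a b : ℝ} (ha : a ∈ Icc 0 (p / 2)) (hb : b ∈ Icc 0 (p / 2)) :
    ‖(a + b : AddCircle p)‖ = min (a + b) (p - (a + b)) := by
  rw [← AddCircle.coe_add, norm_coe_eq_min] <;> grind

theorem norm_add_eq_abs_sub_or_eq_min (hp : 0 < p) (z w : AddCircle p) :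
    ‖z + w‖ = |‖z‖ - ‖w‖| ∨ ‖z + w‖ = min (‖z‖ + ‖w‖) (p - (‖z‖ + ‖w‖)) := by
  rw [← norm_coe_sub_coe (norm_mem_Icc hp z) (norm_mem_Icc hp w),
    ← norm_coe_add_coe (norm_mem_Icc hp z) (norm_mem_Icc hp w)]
  rcases coe_norm_eq_or_eq_neg z with hz | hz <;> rcases coe_norm_eq_or_eq_neg w with hw | hw
  · exact .inr (by rw [hz, hw])
  · exact .inl (by rw [hz, hw, sub_neg_eq_add])
  · exact .inl (by rw [hz, hw, ← norm_neg, neg_add'])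
  · exact .inr (by rw [hz, hw, ← norm_neg, neg_add])

theorem mem_preimage_norm_add_iff (hp : 0 < p) {S T : Set ℝ} {w : AddCircle p} :
    w ∈ (norm ⁻¹' S + norm ⁻¹' T : Set (AddCircle p)) ↔
      ∃ a ∈ S ∩ Icc 0 (p / 2), ∃ b ∈ T ∩ Icc 0 (p / 2),
        ‖w‖ = |a - b| ∨ ‖w‖ = min (a + b) (p - (a + b)) := by
  constructor
  · rintro ⟨u, hu, v, hv, rfl⟩
    exact ⟨_, ⟨hu, norm_mem_Icc hp u⟩, _, ⟨hv, norm_mem_Icc hp v⟩,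
      norm_add_eq_abs_sub_or_eq_min hp u v⟩
  · rintro ⟨a, ⟨haS, ha⟩, b, ⟨hbT, hb⟩, h⟩
    have hA : ‖(a : AddCircle p)‖ ∈ S := by rwa [norm_coe_of_mem_Icc ha]
    have hB : ‖(b : AddCircle p)‖ ∈ T := by rwa [norm_coe_of_mem_Icc hb]
    have hA' : ‖(-a : AddCircle p)‖ ∈ S := by rwa [norm_neg]
    have hB' : ‖(-b : AddCircle p)‖ ∈ T := by rwa [norm_neg]
    rw [← norm_coe_sub_coe ha hb, ← norm_coe_add_coe ha hb, norm_eq_norm_iff_eq_or_eq_neg,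
      norm_eq_norm_iff_eq_or_eq_neg] at h
    rcases h with (rfl | rfl) | (rfl | rfl)
    · exact ⟨_, hA, _, hB', (sub_eq_add_neg _ _).symm⟩
    · exact ⟨_, hA', _, hB, (neg_sub' _ _).trans (sub_neg_eq_add _ _) |>.symm⟩
    · exact ⟨_, hA, _, hB, rfl⟩
    · exact ⟨_, hA', _, hB', (neg_add _ _).symm⟩

theorem abs_eq_half_of_coe_add_half_eq_zero (hp : 0 < p) {x : ℝ} (hx : |x| ≤ p)
    (h : ((x + p / 2 : ℝ) : AddCircle p) = 0) : |x| = p / 2 := by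
  have hnorm : ‖(x : AddCircle p)‖ = p / 2 := by
    rw [AddCircle.coe_add] at h
    rw [eq_neg_of_add_eq_zero_left h, norm_neg, AddCircle.norm_half_period_eq, abs_of_pos hp]
  rw [norm_coe_eq_min hx] at hnorm
  grind

theorem exists_abs_eq_sub_norm_and_coe_add_eq (hp : 0 < p) (z : AddCircle p) :
    ∃ x : ℝ, |x| = p / 2 - ‖z‖ ∧ ((x + p / 2 : ℝ) : AddCircle p) = z := by
  have hz := (norm_mem_Icc hp z).2
  rcases coe_norm_eq_or_eq_neg z with h | h
  · refine ⟨‖z‖ - p / 2, by rw [abs_of_nonpos] <;> linarith, by rw [sub_add_cancel, h]⟩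
  · refine ⟨p / 2 - ‖z‖, abs_of_nonneg (by linarith), ?_⟩
    rw [sub_add_eq_add_sub, add_halves, AddCircle.coe_sub, AddCircle.coe_period, h, sub_neg_eq_add,
      zero_add]

theorem coe_image_Ioo_eq_preimage_norm {r : ℝ} (hr : 0 ≤ r) (hp : 0 < p) :
    ((↑) : ℝ → AddCircle p) '' Ioo r (p - r) = norm ⁻¹' Ioi r := by
  ext z
  constructor
  · rintro ⟨x, ⟨hx₁, hx₂⟩, rfl⟩
    have hx : |x| = x := abs_of_nonneg (by linarith)
    rw [mem_preimage, norm_coe_eq_min (by linarith), hx]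
    exact lt_min hx₁ (by linarith)
  · intro hz
    obtain ⟨x, hx, rfl⟩ := exists_abs_eq_sub_norm_and_coe_add_eq hp z
    have : |x| < p / 2 - r := hx ▸ sub_lt_sub_left hz _
    exact ⟨_, by rw [abs_lt] at this; constructor <;> linarith, rfl⟩

end Norm

theorem arc_one_four_eq_preimage_norm : arc 1 4 = norm ⁻¹' Ioi 1 := by
  rw [← coe_image_Ioo_eq_preimage_norm zero_le_one (by simp)]
  norm_num [arc, arcEnd]

/-! ### The Petersen graph with an edge deleted -/

section Petersen

/-- The Petersen graph: the outer edges `Sum.inl i` form a pentagon, the spokes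
`Sum.inr (Sum.inl i)` run from the outer to the inner vertices, and the inner edges
`Sum.inr (Sum.inr i)` form a pentagram. -/
abbrev petersen : Multigraph where
  V := Fin 5 ⊕ Fin 5
  E := Fin 5 ⊕ Fin 5 ⊕ Fin 5
  src := Sum.elim Sum.inl (Sum.elim Sum.inl Sum.inr)
  tgt := Sum.elim (fun i => Sum.inl (i + 1)) (Sum.elim Sum.inr fun i => Sum.inr (i + 2))

variable {M : Type*} [AddCommGroup M]

theorem boundary_petersen_inl (f : petersen.E → M) (i : Fin 5) :
    petersen.boundary f (.inl i) = f (.inl (i - 1)) - f (.inl i) - f (.inr (.inl i)) := by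
  simp [boundary, single_apply, ← eq_sub_iff_add_eq, sub_eq_add_neg, Finset.sum_add_distrib,
    add_assoc]

theorem boundary_petersen_inr (f : petersen.E → M) (i : Fin 5) :
    petersen.boundary f (.inr i) =
      f (.inr (.inr (i - 2))) - f (.inr (.inr i)) + f (.inr (.inl i)) := by
  simp [boundary, single_apply, ← eq_sub_iff_add_eq, add_comm, add_sub_assoc]

/-- The Petersen graph has no `2`-bisection: in every balanced `2`-colouring of its vertices some
path with three vertices is monochromatic. -/
theorem exists_monochromatic_path : ∀ a b : Fin 5 → ℤˣ, ∑ i, (a i : ℤ) + ∑ i, (b i : ℤ) = 0 →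
    ∃ i, (a (i + 1) = a i ∧ a (i + 1 + 1) = a i) ∨ (b (i + 2) = b i ∧ b (i + 2 + 2) = b i) ∨
      (a (i + 1) = a i ∧ (b i = a i ∨ b (i + 1) = a i)) ∨
      (b (i + 2) = b i ∧ (a i = b i ∨ a (i + 2) = b i)) := by
  decide +kernel

/-- The `1`-chain `x` consists of the deviations of the values of a flow modulo `5` from `5 / 2`, so
that its boundary is `± 5 / 2` at every vertex. Five edges leave a monochromatic path, and their
deviations cannot add up to `± 15 / 2`. -/
theorem exists_abs_boundary_petersen_ne {x : petersen.E → ℝ}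
    (hx : ∀ e ≠ .inr (.inl 0), |x e| < 3 / 2) (hx₀ : |x (.inr (.inl 0))| ≤ 3 / 2) :
    ∃ v, |petersen.boundary x v| ≠ 5 / 2 := by
  by_contra! h
  have exists_unit (v) : ∃ ε : ℤˣ, petersen.boundary x v = (ε : ℤ) * (5 / 2 : ℝ) := by
    rcases eq_or_eq_neg_of_abs_eq (h v) with h | h
    · exact ⟨1, by simp [h]⟩
    · exact ⟨-1, by simp [h]⟩
  choose ε hε using exists_unit
  have hsum : ∑ v, (ε v : ℤ) = 0 := by
    have h := sum_boundary_apply x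
    simp only [hε, ← Finset.sum_mul] at h
    exact_mod_cast (mul_eq_zero.1 h).resolve_right (by norm_num)
  have hpath {u v w : petersen.V} (hv : ε v = ε u) (hw : ε w = ε u) :
      |petersen.boundary x u + petersen.boundary x v + petersen.boundary x w| = 15 / 2 := by
    rcases Int.units_eq_one_or (ε u) with hu | hu <;> norm_num [hε, hv, hw, hu]
  have hout (i : Fin 5) := abs_lt.1 (hx (.inl i) Sum.inl_ne_inr)
  have hin (i : Fin 5) := abs_lt.1 (hx (.inr (.inr i)) (by simp))
  have hspoke (i : Fin 5) : -(3 / 2) ≤ x (.inr (.inl i)) ∧ x (.inr (.inl i)) ≤ 3 / 2 := by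
    rcases eq_or_ne i 0 with rfl | hi
    · exact abs_le.1 hx₀
    · exact abs_le.1 (hx _ (by simpa)).le
  have hinl (i : Fin 5) := boundary_petersen_inl x i
  have hinr (i : Fin 5) := boundary_petersen_inr x i
  obtain ⟨i, ⟨h, h'⟩ | ⟨h, h'⟩ | ⟨h, h' | h'⟩ | ⟨h, h' | h'⟩⟩ :=
    exists_monochromatic_path (fun i => ε (.inl i)) (fun i => ε (.inr i))
      ((Fintype.sum_sum_type _).symm.trans hsum)
  all_goals
    refine (hpath h h').not_lt (abs_lt.2 ?_)
    simp only [hinl, hinr, add_sub_cancel_right]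
    clear hpath hx hx₀
    grind

theorem norm_lt_one_of_boundary_petersen_eq_zero {f : petersen.E → AddCircle (5 : ℝ)}
    (hf : petersen.boundary f = 0) (h : ∀ e ≠ .inr (.inl 0), 1 < ‖f e‖) :
    ‖f (.inr (.inl 0))‖ < 1 := by
  by_contra! h₀
  choose x hx hxf using fun e => exists_abs_eq_sub_norm_and_coe_add_eq (by norm_num) (f e)
  have hlt (e) (he : e ≠ .inr (.inl 0)) : |x e| < 3 / 2 := by linarith [hx e, h e he]
  have hle (e) : |x e| ≤ 3 / 2 := by
    rcases eq_or_ne e (.inr (.inl 0)) with rfl | he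
    · linarith [hx (.inr (.inl 0))]
    · exact (hlt e he).le
  have coe_boundary (v) :
      ((petersen.boundary (fun e => x e + 5 / 2) v : ℝ) : AddCircle (5 : ℝ)) = 0 := by
    have h := boundary_map_apply (QuotientAddGroup.mk' (.zmultiples 5)) (fun e => x e + 5 / 2) v
    exact h.symm.trans (DFunLike.congr_fun ((congrArg petersen.boundary (funext hxf)).trans hf) v)
  obtain ⟨i | i, hi⟩ := exists_abs_boundary_petersen_ne hlt (hle _)
  all_goals refine hi (abs_eq_half_of_coe_add_half_eq_zero (by norm_num) ?_ ?_)
  · have := hle (.inl (i - 1))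
    rw [boundary_petersen_inl]
    grind
  · rw [← coe_boundary (.inl i), boundary_petersen_inl, boundary_petersen_inl,
      ← AddCircle.coe_add_period 5 (_ - (x (.inr (.inl i)) + 5 / 2))]
    congr 1
    ring
  · rw [boundary_petersen_inr]
    grind
  · rw [← coe_boundary (.inr i), boundary_petersen_inr, boundary_petersen_inr]
    congr 1
    ring

/-- Here `u` is a nowhere-zero flow modulo `4` of the Petersen graph without a spoke and `v` is a
nowhere-zero flow modulo `5` of the Petersen graph. The scaled flow `5 / 4 * u` takes values in
`[5 / 4, 15 / 4]`, so that its convex combinations with `v`, other than `v`, stay in `(1, 4)`. -/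
theorem exists_petersen_flows : ∃ u v : petersen.E → ℤ,
    u (.inr (.inl 0)) = 0 ∧ v (.inr (.inl 0)) = 1 ∧
    (∀ e ≠ .inr (.inl 0), (1 ≤ u e ∧ u e ≤ 3) ∧ 1 ≤ v e ∧ v e ≤ 4) ∧
    ∀ w, 5 * petersen.boundary u w = 4 * petersen.boundary v w ∧ 5 ∣ petersen.boundary v w := by
  refine ⟨Sum.elim ![1, 2, 1, 2, 1] (Sum.elim ![0, 3, 1, 3, 1] ![1, 2, 2, 1, 3]),
    Sum.elim ![1, 2, 1, 3, 2] (Sum.elim ![1, 4, 1, 3, 1] ![2, 3, 3, 1, 4]),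
    rfl, rfl, by decide, ?_⟩
  rintro (i | i)
  · rw [boundary_petersen_inl, boundary_petersen_inl]
    revert i
    decide
  · rw [boundary_petersen_inr, boundary_petersen_inr]
    revert i
    decide

theorem exists_boundary_petersen_eq_zero {r : ℝ} (hr : r ∈ Ico 0 1) :
    ∃ f : petersen.E → AddCircle (5 : ℝ), petersen.boundary f = 0 ∧
      (∀ e ≠ .inr (.inl 0), 1 < ‖f e‖) ∧ f (.inr (.inl 0)) = r := by
  obtain ⟨u, v, hu₀, hv₀, hbound, hbdry⟩ := exists_petersen_flows
  let g (e : petersen.E) : ℝ := (1 - r) * (5 / 4) * u e + r * v e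
  have boundary_g (w) : petersen.boundary g w = petersen.boundary v w := by
    have h : (5 * petersen.boundary u w : ℝ) = 4 * petersen.boundary v w := by
      exact_mod_cast (hbdry w).1
    let φ (c : ℝ) : ℤ →+ ℝ := (AddMonoidHom.mulLeft c).comp (Int.castAddHom ℝ)
    calc
      petersen.boundary g w = φ ((1 - r) * (5 / 4)) (petersen.boundary u w) +
          φ r (petersen.boundary v w) := by
        rw [← boundary_map_apply, ← boundary_map_apply, ← Finsupp.add_apply, ← boundary_add]
        rfl
      _ = (1 - r) * (5 / 4) * petersen.boundary u w + r * petersen.boundary v w := rfl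
      _ = petersen.boundary v w := by linear_combination (1 - r) / 4 * h
  refine ⟨fun e => g e, ?_, fun e he => ?_, by simp [g, hu₀, hv₀]⟩
  · ext w
    have hφ := boundary_map_apply (QuotientAddGroup.mk' (.zmultiples (5 : ℝ))) g w
    obtain ⟨n, hn⟩ := (hbdry w).2
    rw [boundary_g, hn] at hφ
    refine hφ.trans ((AddCircle.coe_eq_zero_iff _).2 ⟨n, ?_⟩)
    simp [mul_comm]
  · obtain ⟨⟨hu₁, hu₂⟩, hv₁, hv₂⟩ := hbound e he
    rify at hu₁ hu₂ hv₁ hv₂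
    have hg : g e ∈ Ioo (1 : ℝ) (5 - 1) := by
      have hu := mul_nonneg (sub_nonneg.2 hr.2.le) (sub_nonneg.2 hu₁)
      have hu' := mul_nonneg (sub_nonneg.2 hr.2.le) (sub_nonneg.2 hu₂)
      have hv := mul_nonneg hr.1 (sub_nonneg.2 hv₁)
      have hv' := mul_nonneg hr.1 (sub_nonneg.2 hv₂)
      constructor <;> linarith [hr.2, show g e = (1 - r) * (5 / 4) * u e + r * v e from rfl]
    have h := mem_image_of_mem ((↑) : ℝ → AddCircle (5 : ℝ)) hg
    rwa [coe_image_Ioo_eq_preimage_norm zero_le_one (by norm_num)] at h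

theorem capacity_petersen_deleteEdge : (petersen.deleteEdge (.inr (.inl 0))).capacity
    (.inl 0) (.inr 0) (fun _ => (norm ⁻¹' Ioi 1 : Set (AddCircle (5 : ℝ)))) = norm ⁻¹' Iio 1 := by
  have mem_iff (w : AddCircle (5 : ℝ)) :=
    mem_capacity_deleteEdge (G := petersen) (e := .inr (.inl 0)) (σ := fun _ => norm ⁻¹' Ioi 1)
      (w := w)
  refine Subset.antisymm (fun w hw => ?_) fun w hw => ?_
  · obtain ⟨f, hf, h, rfl⟩ := (mem_iff w).1 hw
    exact norm_lt_one_of_boundary_petersen_eq_zero hf h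
  · have mem_norm := (mem_iff ‖w‖).2 (exists_boundary_petersen_eq_zero ⟨norm_nonneg w, hw⟩)
    rcases coe_norm_eq_or_eq_neg w with h | h
    · rwa [h] at mem_norm
    · rw [h] at mem_norm
      exact neg_neg w ▸ neg_mem_capacity (by simp) mem_norm

end Petersen

/-! ### Graphic sets defined by norms -/

namespace IsGraphic

theorem preimage_norm_Ioi_one : IsGraphic (norm ⁻¹' Ioi 1) :=
  arc_one_four_eq_preimage_norm ▸ arc_one_four

theorem preimage_norm_Iio_one : IsGraphic (norm ⁻¹' Iio 1) := by
  rw [← capacity_petersen_deleteEdge]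
  exact capacity Sum.inl_ne_inr fun _ => preimage_norm_Ioi_one

theorem preimage_norm_Iio_two : IsGraphic (norm ⁻¹' Iio 2) := by
  convert preimage_norm_Iio_one.add preimage_norm_Iio_one using 1
  ext w
  rw [mem_preimage_norm_add_iff (by norm_num), mem_preimage]
  have hw := norm_nonneg w
  constructor
  · intro h
    exact ⟨‖w‖ / 2, by grind, ‖w‖ / 2, by grind, by grind⟩
  · grind

theorem univ : IsGraphic univ := by
  convert preimage_norm_Iio_two.add preimage_norm_Iio_two using 1
  refine (eq_univ_of_forall fun w => ?_).symm
  rw [mem_preimage_norm_add_iff (by norm_num)]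
  have hw := norm_mem_Icc (by norm_num) w
  exact ⟨‖w‖ / 2, by grind, ‖w‖ / 2, by grind, by grind⟩

theorem sInter {𝒜 : Set (Set (AddCircle (5 : ℝ)))} (hfin : 𝒜.Finite)
    (h𝒜 : ∀ A ∈ 𝒜, IsGraphic A) : IsGraphic (⋂₀ 𝒜) := by
  induction 𝒜, hfin using Set.Finite.induction_on with
  | empty => rw [sInter_empty]; exact univ
  | insert _ _ ih =>
    rw [sInter_insert]
    exact (h𝒜 _ (mem_insert _ _)).inter (ih fun A hA => h𝒜 A (mem_insert_of_mem _ hA))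

theorem preimage_norm_Ioo_one_two : IsGraphic (norm ⁻¹' Ioo 1 2) :=
  preimage_norm_Ioi_one.inter preimage_norm_Iio_two

theorem preimage_norm_compl_singleton_zero : IsGraphic (norm ⁻¹' {0}ᶜ) := by
  convert preimage_norm_Iio_one.add preimage_norm_Ioi_one using 1
  ext w
  rw [mem_preimage_norm_add_iff (by norm_num), mem_preimage]
  have hw := norm_mem_Icc (by norm_num) w
  constructor
  · intro h
    rcases le_or_gt ‖w‖ 1 with h | h
    · exact ⟨1 - ‖w‖ / 2, by grind, 1 + ‖w‖ / 2, by grind, by grind⟩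
    · exact ⟨0, by grind, ‖w‖, by grind, by grind⟩
  · grind

theorem preimage_norm_compl_singleton_one : IsGraphic (norm ⁻¹' {1}ᶜ) := by
  convert preimage_norm_Ioo_one_two.add preimage_norm_Ioo_one_two using 1
  ext w
  rw [mem_preimage_norm_add_iff (by norm_num), mem_preimage]
  have hw := norm_mem_Icc (by norm_num) w
  constructor
  · intro h
    rcases lt_or_gt_of_ne h with h | h
    · exact ⟨3 / 2 + ‖w‖ / 2, by grind, 3 / 2 - ‖w‖ / 2, by grind, by grind⟩
    · exact ⟨(5 - ‖w‖) / 2, by grind, (5 - ‖w‖) / 2, by grind, by grind⟩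
  · grind

end IsGraphic

/-- The norms of the values passing through a Wheatstone bridge whose edges carry values of norm
`< 1`, `< 2`, `< 1` and in `(1, 2)` and `S` respectively, parametrised by reals. -/
def bridgeNorms (S : Set ℝ) : Set ℝ :=
  {r | ∃ t ∈ Ioo (0 : ℝ) 1, ∃ q ∈ Ioo (-2 : ℝ) 2, ∃ s ∈ Ioo (-1 : ℝ) 0,
    1 < t - s ∧ min |q + s| (5 - |q + s|) ∈ S ∧ r = min |q + t| (5 - |q + t|)}

theorem setOf_wheatstone_eq_preimage_bridgeNorms {S : Set ℝ} :
    {w : AddCircle (5 : ℝ) | ∃ t ∈ norm ⁻¹' Iio 1, ∃ q ∈ norm ⁻¹' Iio 2, ∃ s ∈ norm ⁻¹' Iio 1,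
      t - s ∈ norm ⁻¹' Ioo 1 2 ∧ q + s ∈ norm ⁻¹' S ∧ q + t = w} = norm ⁻¹' bridgeNorms S := by
  ext w
  constructor
  · rintro ⟨z, ht, z', hq, z'', hs, hD, hF, rfl⟩
    obtain ⟨t, hzt, rfl⟩ := exists_abs_eq_norm_and_coe_eq z
    obtain ⟨q, hzq, rfl⟩ := exists_abs_eq_norm_and_coe_eq z'
    obtain ⟨s, hzs, rfl⟩ := exists_abs_eq_norm_and_coe_eq z''
    replace ht : |t| < 1 := hzt.trans_lt ht
    replace hq : |q| < 2 := hzq.trans_lt hq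
    replace hs : |s| < 1 := hzs.trans_lt hs
    rw [mem_preimage, ← AddCircle.coe_sub, norm_coe_eq_min (by grind)] at hD
    rw [mem_preimage, ← AddCircle.coe_add, norm_coe_eq_min (by grind)] at hF
    rw [mem_preimage, ← AddCircle.coe_add, norm_coe_eq_min (by grind)]
    rcases le_total 0 (t - s) with h | h
    · exact ⟨t, by grind, q, by grind, s, by grind, by grind, hF, rfl⟩
    · refine ⟨-t, by grind, -q, by grind, -s, by grind, by grind, ?_, ?_⟩
      · rwa [← neg_add, abs_neg]
      · rw [← neg_add, abs_neg]
  · rintro ⟨t, ht, q, hq, s, hs, hD, hF, hw⟩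
    rw [← norm_coe_eq_min (by grind)] at hF hw
    have ht' : ‖(t : AddCircle (5 : ℝ))‖ < 1 := by rw [norm_coe_eq_min] <;> grind
    have hq' : ‖(q : AddCircle (5 : ℝ))‖ < 2 := by rw [norm_coe_eq_min] <;> grind
    have hs' : ‖(s : AddCircle (5 : ℝ))‖ < 1 := by rw [norm_coe_eq_min] <;> grind
    have hD' : ‖(t - s : AddCircle (5 : ℝ))‖ ∈ Ioo 1 2 := by
      rw [← AddCircle.coe_sub, norm_coe_eq_min] <;> grind
    rcases norm_eq_norm_iff_eq_or_eq_neg.1 hw with rfl | rfl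
    · exact ⟨t, ht', q, hq', s, hs', hD', hF, rfl⟩
    · refine ⟨-t, by simpa, -q, by simpa, -s, by simpa, ?_, ?_, ?_⟩
      · rwa [mem_preimage, ← neg_sub', norm_neg]
      · rwa [mem_preimage, ← neg_add, norm_neg]
      · rw [← neg_add, AddCircle.coe_add]

namespace IsGraphic

theorem preimage_norm_bridgeNorms {S : Set ℝ} (hS : IsGraphic (norm ⁻¹' S)) :
    IsGraphic (norm ⁻¹' bridgeNorms S) := by
  rw [← setOf_wheatstone_eq_preimage_bridgeNorms]
  exact wheatstone preimage_norm_Iio_one preimage_norm_Iio_two preimage_norm_Iio_one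
    preimage_norm_Ioo_one_two hS

theorem preimage_norm_compl_Icc_one_two : IsGraphic (norm ⁻¹' (Icc 1 2)ᶜ) := by
  convert preimage_norm_bridgeNorms preimage_norm_Ioo_one_two using 1
  ext w
  have hw := norm_mem_Icc (by norm_num) w
  constructor
  · intro h
    rcases not_and_or.1 h with h | h
    · exact ⟨(1 - ‖w‖) / 2, by grind, -(‖w‖ + 1) / 2, by grind, (1 - ‖w‖) / 4 - 1, by grind,
        by grind, by grind, by grind⟩
    · exact ⟨(‖w‖ - 1) / 2, by grind, (‖w‖ + 1) / 2, by grind, -1 / 2, by grind, by grind, by grind,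
        by grind⟩
  · rintro ⟨t, ht, q, hq, s, hs, hD, hF, h⟩
    grind

theorem preimage_norm_compl_singleton_two : IsGraphic (norm ⁻¹' {2}ᶜ) := by
  convert preimage_norm_bridgeNorms preimage_norm_Ioi_one using 1
  ext w
  have hw := norm_mem_Icc (by norm_num) w
  constructor
  · intro h
    rcases lt_or_gt_of_ne h with h | h
    · exact ⟨(2 - ‖w‖) / 4, by grind, -(3 * ‖w‖ + 2) / 4, by grind, (2 - ‖w‖) / 8 - 1, by grind,
        by grind, by grind, by grind⟩
    · exact ⟨(‖w‖ - 1) / 2, by grind, (‖w‖ + 1) / 2, by grind, -1 / 2, by grind, by grind, by grind,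
        by grind⟩
  · rintro ⟨t, ht, q, hq, s, hs, hD, hF, h⟩
    grind

end IsGraphic

/-! ### Integer cells -/

/-- The points of `ℝ/5ℤ` whose norm lies in the integer cell spanned by `r`: the singleton `{r}` if
`r` is an integer and the unit interval around `r` otherwise. -/
def normCell (r : ℝ) : Set (AddCircle (5 : ℝ)) :=
  norm ⁻¹' Icc ⌊r⌋ ⌈r⌉

theorem isGraphic_compl_normCell {r : ℝ} (hr : r ∈ Icc 0 (5 / 2)) : IsGraphic (normCell r)ᶜ := by
  have compl_eq {m n : ℤ} {S : Set ℝ} (hm : ⌊r⌋ = m) (hn : ⌈r⌉ = n)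
      (hS : ∀ x ∈ Icc (0 : ℝ) (5 / 2), x ∉ Icc (m : ℝ) n ↔ x ∈ S) :
      (normCell r)ᶜ = norm ⁻¹' S := by
    ext w
    rw [normCell, hm, hn]
    exact hS ‖w‖ (norm_mem_Icc (by norm_num) w)
  have floor_cases : ⌊r⌋ = 0 ∨ ⌊r⌋ = 1 ∨ ⌊r⌋ = 2 := by
    have := Int.floor_nonneg.2 hr.1
    have : ⌊r⌋ < 3 := Int.floor_lt.2 (by norm_num; linarith [hr.2])
    omega
  have ceil_cases : ⌈r⌉ = ⌊r⌋ ∨ ⌈r⌉ = ⌊r⌋ + 1 := by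
    have := Int.floor_le_ceil r
    have := Int.ceil_le_floor_add_one r
    omega
  rcases floor_cases with hm | hm | hm <;> rcases ceil_cases with hn | hn <;> rw [hm] at hn
  · rw [compl_eq hm hn (S := {0}ᶜ) (by push_cast; grind)]
    exact .preimage_norm_compl_singleton_zero
  · rw [compl_eq hm hn (S := Ioi 1) (by push_cast; grind)]
    exact .preimage_norm_Ioi_one
  · rw [compl_eq hm hn (S := {1}ᶜ) (by push_cast; grind)]
    exact .preimage_norm_compl_singleton_one
  · rw [compl_eq hm hn (S := (Icc 1 2)ᶜ) (by push_cast; grind)]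
    exact .preimage_norm_compl_Icc_one_two
  · rw [compl_eq hm hn (S := {2}ᶜ) (by push_cast; grind)]
    exact .preimage_norm_compl_singleton_two
  · rw [compl_eq hm hn (S := Iio 2) (by push_cast; grind)]
    exact .preimage_norm_Iio_two

theorem finite_range_normCell_norm : (range fun w : AddCircle (5 : ℝ) => normCell ‖w‖).Finite := by
  let cell (mn : ℤ × ℤ) : Set (AddCircle (5 : ℝ)) := norm ⁻¹' Icc mn.1 mn.2
  refine (((finite_Icc 0 3).prod (finite_Icc 0 3)).image cell).subset ?_
  rintro _ ⟨w, rfl⟩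
  have hw := norm_mem_Icc (by norm_num) w
  refine ⟨(⌊‖w‖⌋, ⌈‖w‖⌉), ⟨⟨?_, ?_⟩, ?_, ?_⟩, rfl⟩
  · exact Int.floor_nonneg.2 hw.1
  · exact Int.floor_le_iff.2 (by norm_num; linarith [hw.2])
  · exact Int.ceil_nonneg hw.1
  · exact Int.ceil_le.2 (by norm_num; linarith [hw.2])

theorem coe_mem_arc_iff {a b : ℤ} {x : ℝ} : (x : AddCircle (5 : ℝ)) ∈ arc a b ↔
    ∃ k : ℤ, x ∈ Ioo ((a + 5 * k : ℤ) : ℝ) (arcEnd a b + 5 * k : ℤ) := by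
  push_cast
  constructor
  · rintro ⟨t, ht, htx⟩
    obtain ⟨k, hk⟩ := (AddCircle.coe_eq_zero_iff (5 : ℝ)).1
      ((AddCircle.coe_sub (5 : ℝ) x t).trans (sub_eq_zero.2 htx.symm))
    rw [zsmul_eq_mul] at hk
    exact ⟨k, by constructor <;> linarith [ht.1, ht.2]⟩
  · rintro ⟨k, hk⟩
    refine ⟨x - 5 * k, by constructor <;> linarith [hk.1, hk.2], ?_⟩
    change ((x - 5 * k : ℝ) : AddCircle (5 : ℝ)) = x
    rw [AddCircle.coe_sub, sub_eq_self, AddCircle.coe_eq_zero_iff]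
    exact ⟨k, by rw [zsmul_eq_mul, mul_comm]⟩

theorem coe_mem_arc_of_mem_Icc_floor_ceil {a b : ℤ} {x y : ℝ}
    (hx : (x : AddCircle (5 : ℝ)) ∈ arc a b) (hxy : x ∈ Icc (⌊y⌋ : ℝ) ⌈y⌉) :
    (y : AddCircle (5 : ℝ)) ∈ arc a b := by
  obtain ⟨k, hk⟩ := coe_mem_arc_iff.1 hx
  refine coe_mem_arc_iff.2 ⟨k, ?_, ?_⟩
  · exact Int.lt_ceil.1 (Int.cast_lt.1 (hk.1.trans_le hxy.2))
  · exact Int.floor_lt.1 (Int.cast_lt.1 (hxy.1.trans_lt hk.2))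

theorem mem_of_mem_SI5_of_mem_normCell {A : Set (AddCircle (5 : ℝ))} (hA : A ∈ SI5)
    {z w : AddCircle (5 : ℝ)} (hz : z ∈ A) (hzw : z ∈ normCell ‖w‖) : w ∈ A := by
  obtain ⟨hsymm, s, rfl⟩ := hA
  have coe_norm_mem_iff {u : AddCircle (5 : ℝ)} :
      (‖u‖ : AddCircle (5 : ℝ)) ∈ ⋃ p ∈ s, arc p.1 p.2 ↔ u ∈ ⋃ p ∈ s, arc p.1 p.2 := by
    rcases coe_norm_eq_or_eq_neg u with h | h
    · rw [h]
    · rw [h, ← hsymm]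
  rw [← coe_norm_mem_iff] at hz ⊢
  obtain ⟨q, hq, hz⟩ := mem_iUnion₂.1 hz
  exact mem_iUnion₂.2 ⟨q, hq, coe_mem_arc_of_mem_Icc_floor_ceil hz hzw⟩

theorem sInter_compl_normCell_eq {A : Set (AddCircle (5 : ℝ))} (hA : A ∈ SI5) :
    ⋂₀ ((fun w => (normCell ‖w‖)ᶜ) '' Aᶜ) = A := by
  rw [sInter_image]
  ext z
  constructor
  · intro h
    by_contra hz
    exact mem_iInter₂.1 h z hz ⟨Int.floor_le _, Int.le_ceil _⟩
  · intro hz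
    exact mem_iInter₂.2 fun w hw hzw => hw (mem_of_mem_SI5_of_mem_normCell hA hz hzw)

/-- every element of `SI_5` is graphic, i.e. it is the open
5-capacity of some generalised edge; hence `GI_5 = SI_5`. -/
theorem every_SI5_graphic :
    ∀ A ∈ SI5, ∃ (G : Multigraph) (x y : G.V), x ≠ y ∧ G.CP5 x y = A := by
  intro A hA
  have hfin : ((fun w => (normCell ‖w‖)ᶜ) '' Aᶜ).Finite := by
    rw [← image_image compl]
    exact (finite_range_normCell_norm.subset (image_subset_range _ _)).image _
  have hgraphic : IsGraphic (⋂₀ ((fun w => (normCell ‖w‖)ᶜ) '' Aᶜ)) :=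
    .sInter hfin <| forall_mem_image.2 fun w _ =>
      isGraphic_compl_normCell (norm_mem_Icc (by norm_num) w)
  rwa [sInter_compl_normCell_eq hA] at hgraphic
end
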